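/- arXiv:1904.10203 — 4 statements merged into one kernel-verified Lean document; each statement's English description precedes it below -/
import Mathlib

section
/- Let s be a complex number such that cosh(s) is real and satisfies −1 ≤ Re(cosh s) ≤ 1. Then s is purely imaginary, i.e. Re(s) = 0. -/
/-- If `cosh s` is real with real part in `[-1, 1]`, then `s` is purely imaginary. -/
theorem cosh_real_in_Icc_imp_purely_imaginary (s : ℂ)
    (h_real : (Complex.cosh s).im = 0)
    (h_le : -1 ≤ (Complex.cosh s).re) (h_ge : (Complex.cosh s).re ≤ 1) :
    s.re = 0 := by
  have key : Complex.cosh s = ((Real.cosh s.re * Real.cos s.im : ℝ) : ℂ)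
      + ((Real.sinh s.re * Real.sin s.im : ℝ) : ℂ) * Complex.I := by
    conv_lhs => rw [← Complex.re_add_im s]
    rw [Complex.cosh_add, Complex.cosh_mul_I, Complex.sinh_mul_I]
    push_cast
    ring
  have hre : (Complex.cosh s).re = Real.cosh s.re * Real.cos s.im := by
    rw [key, Complex.add_re, Complex.re_ofReal_mul, Complex.ofReal_re, Complex.I_re]; ring
  have him : (Complex.cosh s).im = Real.sinh s.re * Real.sin s.im := by
    rw [key, Complex.add_im, Complex.im_ofReal_mul, Complex.ofReal_im, Complex.I_im]; ring
  rw [hre] at h_le h_ge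
  rw [him] at h_real
  rcases mul_eq_zero.mp h_real with h | h
  · exact Real.sinh_eq_zero.mp h
  · have h1 := Real.sin_sq_add_cos_sq s.im
    have h2 := Real.cosh_sq s.re
    have h3 : (Real.cosh s.re * Real.cos s.im) ^ 2 ≤ 1 := by nlinarith
    have h4 : Real.cos s.im ^ 2 = 1 := by rw [h] at h1; linarith
    rw [mul_pow, h4, h2] at h3
    exact Real.sinh_eq_zero.mp (pow_eq_zero_iff two_ne_zero |>.mp
      (le_antisymm (by linarith) (sq_nonneg _)))
end

section
/- Let ε be a real number with 0 < ε < (π/2)², and let x, y, v be real numbers with x > 0 and v² ≤ x². Then Real.arccos(1 − 2(y² + v²)/(x² + y²)) < √ε if and only if 2v² − (1 − cos √ε)·x² + (1 + cos √ε)·y² < 0. -/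
open Real

/-- For `0 < ε < (π/2)²`, `x > 0`, `v² ≤ x²`, the inequality
`arccos(1 - 2(y² + v²)/(x² + y²)) < √ε` holds iff
`2v² - (1 - cos √ε)·x² + (1 + cos √ε)·y² < 0`. -/
theorem grauert_tube_defining_inequality (ε x y v : ℝ)
    (hε₀ : 0 < ε) (hε₁ : ε < (π / 2) ^ 2) (hx : 0 < x) (hv : v ^ 2 ≤ x ^ 2) :
    Real.arccos (1 - 2 * (y ^ 2 + v ^ 2) / (x ^ 2 + y ^ 2)) < Real.sqrt ε ↔
    2 * v ^ 2 - (1 - Real.cos (Real.sqrt ε)) * x ^ 2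
      + (1 + Real.cos (Real.sqrt ε)) * y ^ 2 < 0 := by
  have hD : 0 < x ^ 2 + y ^ 2 := by positivity
  have hs0 : 0 ≤ √ε := Real.sqrt_nonneg ε
  have hspi : √ε ≤ π := by
    have h1 : √ε < π / 2 := (Real.sqrt_lt' (by positivity)).2 hε₁
    linarith [Real.pi_pos]
  have ht0 : 0 ≤ 2 * (y ^ 2 + v ^ 2) / (x ^ 2 + y ^ 2) := by positivity
  have ht2 : 2 * (y ^ 2 + v ^ 2) / (x ^ 2 + y ^ 2) ≤ 2 := by
    rw [div_le_iff₀ hD]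
    linarith
  have hcos : Real.cos (Real.arccos (1 - 2 * (y ^ 2 + v ^ 2) / (x ^ 2 + y ^ 2)))
      = 1 - 2 * (y ^ 2 + v ^ 2) / (x ^ 2 + y ^ 2) :=
    Real.cos_arccos (by linarith) (by linarith)
  rw [← Real.strictAntiOn_cos.lt_iff_gt ⟨hs0, hspi⟩
    ⟨Real.arccos_nonneg _, Real.arccos_le_pi _⟩, hcos, lt_sub_comm, div_lt_iff₀ hD]
  constructor <;> intro h <;> linarith
end

section
/- Let ε be a real number with 0 < ε < (π/2)², and define R : ℂ × ℂ → ℝ by R(w, z) = 2(Im w)² − (1 − cos √ε)·(Re z)² + (1 + cos √ε)·(Im z)². Then for every point p ∈ ℂ² and every direction (a, b) ∈ ℂ × ℂ, the sum of the second derivative (Hessian) of R at p evaluated on ((a,b),(a,b)) and on ((ia,ib),(ia,ib)) equals 4(|a|² + cos(√ε)·|b|²); in particular this sum is strictly positive whenever (a, b) ≠ (0, 0), so R is strictly plurisubharmonic. -/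
open Real

theorem hess_quad_aux {E : Type*} [NormedAddCommGroup E] [NormedSpace ℝ E]
    (l₁ l₂ l₃ : E →L[ℝ] ℝ) (c₁ c₂ c₃ : ℝ) (p v : E) :
    iteratedFDeriv ℝ 2 (fun q : E => c₁ * l₁ q ^ 2 - c₂ * l₂ q ^ 2 + c₃ * l₃ q ^ 2) p ![v, v]
      = 2 * (c₁ * l₁ v ^ 2 - c₂ * l₂ v ^ 2 + c₃ * l₃ v ^ 2) := by
  have h1 : fderiv ℝ (fun q : E => c₁ * l₁ q ^ 2 - c₂ * l₂ q ^ 2 + c₃ * l₃ q ^ 2)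
      = ((2 * c₁) • l₁.smulRight l₁ - (2 * c₂) • l₂.smulRight l₂
        + (2 * c₃) • l₃.smulRight l₃ : E →L[ℝ] (E →L[ℝ] ℝ)) := by
    funext q
    have h := ((((l₁.hasFDerivAt (x := q)).pow 2).const_mul c₁).sub
      (((l₂.hasFDerivAt (x := q)).pow 2).const_mul c₂)).add
      (((l₃.hasFDerivAt (x := q)).pow 2).const_mul c₃)
    refine (HasFDerivAt.fderiv h).trans ?_
    ext w
    simp
    ring
  rw [iteratedFDeriv_two_apply, h1, ContinuousLinearMap.fderiv]
  simp
  ring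

/-- The function `R(w,z) = 2(Im w)² - (1 - cos √ε)(Re z)² + (1 + cos √ε)(Im z)²` is
strictly plurisubharmonic: for every point `p` and direction `(a,b)`, the sum of its
real Hessian evaluated on `(a,b)` and on `(ia, ib)` equals `4(|a|² + cos(√ε)|b|²)`,
which is strictly positive when `(a,b) ≠ 0`. -/
theorem grauert_tube_strictly_plurisubharmonic (ε : ℝ)
    (hε₀ : 0 < ε) (hε₁ : ε < (π / 2) ^ 2) (p : ℂ × ℂ) (a b : ℂ) :
    (iteratedFDeriv ℝ 2
        (fun q : ℂ × ℂ =>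
          2 * q.1.im ^ 2 - (1 - Real.cos (Real.sqrt ε)) * q.2.re ^ 2
            + (1 + Real.cos (Real.sqrt ε)) * q.2.im ^ 2)
        p ![(a, b), (a, b)]
      + iteratedFDeriv ℝ 2
        (fun q : ℂ × ℂ =>
          2 * q.1.im ^ 2 - (1 - Real.cos (Real.sqrt ε)) * q.2.re ^ 2
            + (1 + Real.cos (Real.sqrt ε)) * q.2.im ^ 2)
        p ![(Complex.I * a, Complex.I * b), (Complex.I * a, Complex.I * b)]
      = 4 * (‖a‖ ^ 2 + Real.cos (Real.sqrt ε) * ‖b‖ ^ 2)) ∧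
    ((a, b) ≠ (0, 0) →
      0 < iteratedFDeriv ℝ 2
        (fun q : ℂ × ℂ =>
          2 * q.1.im ^ 2 - (1 - Real.cos (Real.sqrt ε)) * q.2.re ^ 2
            + (1 + Real.cos (Real.sqrt ε)) * q.2.im ^ 2)
        p ![(a, b), (a, b)]
      + iteratedFDeriv ℝ 2
        (fun q : ℂ × ℂ =>
          2 * q.1.im ^ 2 - (1 - Real.cos (Real.sqrt ε)) * q.2.re ^ 2
            + (1 + Real.cos (Real.sqrt ε)) * q.2.im ^ 2)
        p ![(Complex.I * a, Complex.I * b), (Complex.I * a, Complex.I * b)]) := by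
  have key : ∀ v : ℂ × ℂ, iteratedFDeriv ℝ 2
        (fun q : ℂ × ℂ =>
          2 * q.1.im ^ 2 - (1 - Real.cos (Real.sqrt ε)) * q.2.re ^ 2
            + (1 + Real.cos (Real.sqrt ε)) * q.2.im ^ 2) p ![v, v]
      = 2 * (2 * v.1.im ^ 2 - (1 - Real.cos (Real.sqrt ε)) * v.2.re ^ 2
            + (1 + Real.cos (Real.sqrt ε)) * v.2.im ^ 2) := fun v =>
    hess_quad_aux (Complex.imCLM.comp (ContinuousLinearMap.fst ℝ ℂ ℂ))
      (Complex.reCLM.comp (ContinuousLinearMap.snd ℝ ℂ ℂ))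
      (Complex.imCLM.comp (ContinuousLinearMap.snd ℝ ℂ ℂ)) _ _ _ p v
  have hc : 0 < Real.cos (Real.sqrt ε) := by
    apply Real.cos_pos_of_mem_Ioo
    have h0 := Real.sqrt_nonneg ε
    have hp := Real.pi_pos
    refine ⟨by linarith, (Real.sqrt_lt' (by positivity)).2 hε₁⟩
  rw [key, key]
  have heq : 2 * (2 * a.im ^ 2 - (1 - Real.cos (Real.sqrt ε)) * b.re ^ 2
            + (1 + Real.cos (Real.sqrt ε)) * b.im ^ 2) +
      2 * (2 * (Complex.I * a).im ^ 2 - (1 - Real.cos (Real.sqrt ε)) * (Complex.I * b).re ^ 2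
            + (1 + Real.cos (Real.sqrt ε)) * (Complex.I * b).im ^ 2)
      = 4 * (‖a‖ ^ 2 + Real.cos (Real.sqrt ε) * ‖b‖ ^ 2) := by
    rw [Complex.sq_norm, Complex.sq_norm, Complex.normSq_apply, Complex.normSq_apply]
    simp
    ring
  refine ⟨heq, fun hab => ?_⟩
  refine lt_of_lt_of_eq ?_ heq.symm
  by_cases ha : a = 0
  · have hb : b ≠ 0 := fun hb => hab (by rw [ha, hb])
    have := norm_pos_iff.2 hb
    positivity
  · have := norm_pos_iff.2 ha
    positivity
end

section
/- Let x, y be real numbers with x > 0. Then the set { (1 + α·x)/(√(1 + α²)·√(1 + x² + y²)) : α ∈ ℝ, α > 0 } has greatest element √(1 + x²)/√(1 + x² + y²), attained at α = x. -/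
/-- For `x > 0`, the set `{(1 + αx)/(√(1+α²)·√(1+x²+y²)) : α > 0}` has greatest element
`√(1+x²)/√(1+x²+y²)`, attained at `α = x`. -/
theorem spherical_distance_sup (x y : ℝ) (hx : 0 < x) :
    IsGreatest
      {t : ℝ | ∃ α : ℝ, 0 < α ∧
        t = (1 + α * x) / (Real.sqrt (1 + α ^ 2) * Real.sqrt (1 + x ^ 2 + y ^ 2))}
      (Real.sqrt (1 + x ^ 2) / Real.sqrt (1 + x ^ 2 + y ^ 2)) ∧
    (1 + x * x) / (Real.sqrt (1 + x ^ 2) * Real.sqrt (1 + x ^ 2 + y ^ 2))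
      = Real.sqrt (1 + x ^ 2) / Real.sqrt (1 + x ^ 2 + y ^ 2) := by
  have key : (1 + x * x) / (Real.sqrt (1 + x ^ 2) * Real.sqrt (1 + x ^ 2 + y ^ 2))
      = Real.sqrt (1 + x ^ 2) / Real.sqrt (1 + x ^ 2 + y ^ 2) := by
    have h1 : 0 < Real.sqrt (1 + x ^ 2) := Real.sqrt_pos.mpr (by positivity)
    have h3 : 1 + x * x = Real.sqrt (1 + x ^ 2) * Real.sqrt (1 + x ^ 2) := by
      rw [Real.mul_self_sqrt (by positivity)]; ring
    rw [h3, mul_div_mul_left _ _ h1.ne']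
  refine ⟨⟨⟨x, hx, key.symm⟩, ?_⟩, key⟩
  rintro t ⟨a, ha, rfl⟩
  have h1 : 0 < Real.sqrt (1 + a ^ 2) := Real.sqrt_pos.mpr (by positivity)
  rw [← div_div]
  apply div_le_div_of_nonneg_right _ (Real.sqrt_nonneg _)
  rw [div_le_iff₀ h1, ← Real.sqrt_mul (by positivity)]
  apply Real.le_sqrt_of_sq_le
  nlinarith [sq_nonneg (a - x)]
end
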